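/- arXiv:2206.07561 — 2 statements merged into one kernel-verified Lean document; each statement's English description precedes it below -/
import Mathlib

section
/- Let (X1,d1) and (X2,d2) be finite metric spaces and let (X1×X2, d1⊗d2) be their direct product. Then (X1×X2, d1⊗d2) is of negative type if and only if both (X1,d1) and (X2,d2) are of negative type. -/
/-!
Negative type is stable under pulling a distance function back along a map `f : X → Y`, because
the quadratic form of the pulled-back distance at `w` is the quadratic form of the original one
at the pushforward of `w` (`NegativeType.comp`), and it is stable under sums
(`NegativeType.add`). The distance of the product is the sum of the pullbacks of the two factor
distances along the projections; conversely, each factor distance is the pullback of the product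
distance along the inclusion of a slice `x ↦ (x, b)` or `y ↦ (a, y)`.
-/

open scoped BigOperators

/-- A metric (distance function) `d` on `X` is of negative type if for every finitely
supported function `w : X → ℤ` with `∑ x, w x = 0` one has
`∑ x, ∑ y, w x * w y * d x y ≤ 0`. -/
def NegativeType {X : Type*} (d : X → X → ℝ) : Prop :=
  ∀ w : X → ℤ, (Function.support w).Finite → (∑ᶠ x, w x) = 0 →
    (∑ᶠ x, ∑ᶠ y, (w x : ℝ) * (w y : ℝ) * d x y) ≤ 0

theorem negativeType_iff_of_fintype {X : Type*} [Fintype X] (d : X → X → ℝ) :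
    NegativeType d ↔ ∀ w : X → ℤ, ∑ x, w x = 0 →
      ∑ x, ∑ y, (w x : ℝ) * (w y : ℝ) * d x y ≤ 0 := by
  simp [NegativeType, finsum_eq_sum_of_fintype, Set.toFinite]

theorem NegativeType.add {X : Type*} [Fintype X] {d e : X → X → ℝ}
    (hd : NegativeType d) (he : NegativeType e) :
    NegativeType fun x y => d x y + e x y := by
  rw [negativeType_iff_of_fintype] at *
  intro w hw
  simp only [mul_add, Finset.sum_add_distrib]
  exact add_nonpos (hd w hw) (he w hw)

theorem NegativeType.comp {X Y : Type*} [Fintype X] [Fintype Y] {d : Y → Y → ℝ}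
    (hd : NegativeType d) (f : X → Y) : NegativeType fun x y => d (f x) (f y) := by
  classical
  rw [negativeType_iff_of_fintype] at *
  intro w hw
  -- `v` is the pushforward of `w` along `f`.
  let v : Y → ℤ := fun y => ∑ x with f x = y, w x
  have hv : ∀ g : Y → ℝ, ∑ y, (v y : ℝ) * g y = ∑ x, (w x : ℝ) * g (f x) := by
    intro g
    rw [← Finset.sum_fiberwise Finset.univ f]
    refine Finset.sum_congr rfl fun y _ => ?_
    simp only [v, Int.cast_sum, Finset.sum_mul]
    refine Finset.sum_congr rfl fun x hx => ?_
    rw [(Finset.mem_filter.mp hx).2]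
  have h := hd v ((Finset.sum_fiberwise Finset.univ f w).trans hw)
  simpa only [mul_assoc, ← Finset.mul_sum, hv] using h

/-- The direct product of two finite metric spaces, with distance
`(d₁ ⊗ d₂)((x₁,x₂),(y₁,y₂)) = d₁(x₁,y₁) + d₂(x₂,y₂)`, is of negative type if and only if
both factors are of negative type. -/
theorem negativeType_directProd_iff {X1 X2 : Type*} [Fintype X1] [Fintype X2]
    [Nonempty X1] [Nonempty X2] [MetricSpace X1] [MetricSpace X2] :
    NegativeType (fun p q : X1 × X2 => dist p.1 q.1 + dist p.2 q.2) ↔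
      (NegativeType fun a b : X1 => dist a b) ∧ (NegativeType fun a b : X2 => dist a b) := by
  constructor
  · intro h
    obtain ⟨a⟩ := ‹Nonempty X1›
    obtain ⟨b⟩ := ‹Nonempty X2›
    exact ⟨by simpa using h.comp fun x : X1 => (x, b), by simpa using h.comp fun y : X2 => (a, y)⟩
  · rintro ⟨h1, h2⟩
    exact (h1.comp Prod.fst).add (h2.comp Prod.snd)
end

section
/- Let t ≥ 3 be a fixed integer and for each integer k ≥ 2 let W(k,t) be the windmill graph on n = k(t−1)+1 vertices. Then the sequence (−1)^{n−1} c_0(W(k,t)), …, (−1)^{n−1} c_{n−2}(W(k,t)) is unimodal, and there exist a constant C > 0 and an integer K such that for all k ≥ K, every index m at which this sequence attains its maximum satisfies |m − kt(t−1)/(2(t+1))| ≤ C · log k; that is, as k → ∞ the peak occurs at kt(t−1)/(2(t+1)) + O(log k). -/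
/-!
The distance matrix of the windmill graph has an equitable partition, which yields
`charpoly D = (X + 1)^(k(t-2)) (X + t)^(k-1) (X² - (2N - t) X - N)` with `N = k(t-1)`
(`windmill_charpoly`). Hence the normalised coefficients are those of `F = G * Q`, where
`G = (X + 1)^(k(t-2)) (X + t)^(k-1)` (`baseG`) and `Q = N + (2N - t) X - X²` (`quadQ`).

Unimodality: the differences of the sequence are the coefficients of `(1 - X) Q G`. The cubic
`(1 - X) Q` has coefficient signs `+ + - +`, and multiplication by `X + c` with `c ≥ 0` preserves
such a pattern of at most two sign changes (`SignPattern.mul`). The coefficient of `F` at `n` is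
`-1` and the one at `n - 1` is `0` (zero trace), so the second sign change occurs after `n`. The
same argument applied to `(1 - X) G` shows that the coefficients `g` of `G` are unimodal.

Peak: `G` satisfies a first-order differential equation, so with `e i = g (i+1) - g i`,
`t (i+1) e i + (N - i) e (i-1) = R i * g i`, where `R i = k t (t-1) - (t+1) (2i+1)`
(`base_recurrence_windmill`). By unimodality of `g`, the sign of `R` determines the sign of `e`
near the zero of `R`. A difference of the normalised coefficients is
`N e i + (2N - t) e (i-1) - e (i-2)`, in which the first two terms dominate `R i * g i / t` in
absolute value while the last one is at most comparable to `g i`. So the sequence strictly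
increases at some index a bounded distance below `μ = k t (t-1) / (2 (t+1))`, and strictly decreases
at some index a bounded distance above it; unimodality puts every maximiser in between. The bound
obtained is in fact `O(1)`.
-/

open Polynomial

/-- The windmill graph `W(k,t)`: `k` disjoint copies of `K_(t-1)` together with one
additional universal vertex (`none`) adjacent to all other vertices, i.e. `k` cliques
`K_t` joined at one shared universal vertex. It has `n = k*(t-1) + 1` vertices. -/
def windmill (k t : ℕ) : SimpleGraph (Option (Fin k × Fin (t - 1))) :=
  SimpleGraph.fromRel (fun u v => u = none ∨ ∃ p q, u = some p ∧ v = some q ∧ p.1 = q.1)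

/-- `distCoeff G k` is the coefficient `c_k(G)` of `x^k` in `det (D(G) - x I)`, where
`D(G)` is the distance matrix of `G`; note `det (D - x I) = (-1)^n det (x I - D)`. -/
noncomputable def distCoeff {V : Type*} [Fintype V] [DecidableEq V]
    (G : SimpleGraph V) (k : ℕ) : ℝ :=
  (-1 : ℝ) ^ (Fintype.card V) *
    (Matrix.charpoly (Matrix.of fun u v : V => (G.dist u v : ℝ))).coeff k

/-- `(-1)^(n-1) c_i(G)` for the windmill graph `G = W(k,t)` on `n = k(t-1)+1` vertices. -/
noncomputable def windmillNormCoeff (k t i : ℕ) : ℝ :=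
  (-1 : ℝ) ^ (k * (t - 1) + 1 - 1) * distCoeff (windmill k t) i

/-! ### The characteristic polynomial of the distance matrix -/

/-- A matrix that is constant on the blocks of a partition `f : α → β` has, up to a power of `X`,
the characteristic polynomial of its quotient matrix, whose entries are weighted by block sizes.
This is `charpoly (A * B)` versus `charpoly (B * A)` with `A` the indicator matrix of `f`. -/
theorem charpoly_submatrix_fibers {α β : Type*} [Fintype α] [Fintype β] [DecidableEq α]
    [DecidableEq β] (Q : Matrix β β ℝ) (f : α → β) (h : Fintype.card β ≤ Fintype.card α) :
    (Q.submatrix f f).charpoly = X ^ (Fintype.card α - Fintype.card β) *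
      (Matrix.of fun p q => Q p q * (Fintype.card {u // f u = q} : ℝ)).charpoly := by
  have h1 : Q.submatrix f f =
      (Matrix.of fun u p => if f u = p then (1 : ℝ) else 0) * (Matrix.of fun p u => Q p (f u)) := by
    ext u v
    simp [Matrix.mul_apply]
  rw [h1, Matrix.charpoly_mul_comm_of_le _ _ h]
  congr 2
  ext p q
  simp only [Matrix.mul_apply, Matrix.of_apply, mul_ite, mul_one, mul_zero]
  rw [Fintype.card_subtype, ← Finset.sum_filter,
    Finset.sum_congr rfl (g := fun _ => Q p q) (by intro x hx; simp at hx; rw [hx])]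
  simp [mul_comm]

/-- The matrix recording, for two blocks (the centre `none` or a clique `some c`), the common
value of `dist u v + [u = v]` for `u` in the first block and `v` in the second. -/
def blockMatrix (k : ℕ) : Matrix (Option (Fin k)) (Option (Fin k)) ℝ :=
  Matrix.of fun p q => match p, q with
    | some a, some b => if a = b then 1 else 2
    | _, _ => 1

theorem windmill_dist (k t : ℕ) (u v : Option (Fin k × Fin (t - 1))) :
    ((windmill k t).dist u v : ℝ) =
      blockMatrix k (u.map Prod.fst) (v.map Prod.fst) - (if u = v then 1 else 0) := by
  have key : ∀ u v, u ≠ v → (windmill k t).Adj u v → (windmill k t).dist u v = 1 :=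
    fun u v _ h => SimpleGraph.dist_eq_one_iff_adj.2 h
  have hn : ∀ p, (windmill k t).Adj none (some p) := by
    intro p; simp [windmill, SimpleGraph.fromRel_adj]
  rcases u with _ | u <;> rcases v with _ | v
  · simp [blockMatrix]
  · simp [blockMatrix, key _ _ (by simp) (hn v)]
  · simp [blockMatrix, key _ _ (by simp) (hn u).symm]
  · by_cases huv : u = v
    · subst huv; simp [blockMatrix]
    · by_cases h1 : u.1 = v.1
      · have : (windmill k t).Adj (some u) (some v) := by
          simp only [windmill, SimpleGraph.fromRel_adj]
          exact ⟨by simpa using huv, Or.inl (Or.inr ⟨u, v, rfl, rfl, h1⟩)⟩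
        simp [blockMatrix, key _ _ (by simpa using huv) this, huv, h1]
      · have hna : ¬ (windmill k t).Adj (some u) (some v) := by
          simp only [windmill, SimpleGraph.fromRel_adj]
          rintro ⟨-, h | h⟩
          · simp at h; exact h1 h
          · simp at h; exact h1 h.symm
        have hw : (windmill k t).dist (some u) (some v) ≤ 2 :=
          SimpleGraph.dist_le
            (SimpleGraph.Walk.cons (hn u).symm (SimpleGraph.Walk.cons (hn v) .nil))
        have hr : (windmill k t).Reachable (some u) (some v) :=
          ((hn u).symm.reachable).trans (hn v).reachable
        have h2 := hr.one_lt_dist_of_ne_of_not_adj (by simpa using huv) hna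
        have h3 : (windmill k t).dist (some u) (some v) = 2 := by omega
        simp [blockMatrix, h3, huv, h1]

/-- The matrix left after a second lumping, of all cliques into one block (`true`) next to the
centre (`false`). -/
def lumpedMatrix (t : ℝ) : Matrix Bool Bool ℝ :=
  Matrix.of fun a b => match a, b with
    | false, false => t
    | false, true => t - 1
    | true, false => 1
    | true, true => 2 * (t - 1)

/-- Lumping twice: `D + 1` is constant on the blocks centre / cliques, and the quotient matrix plus
`(t - 1) • 1` is constant on the two blocks centre / all cliques, which leaves a 2 × 2 matrix. -/
theorem windmill_charpoly (k t : ℕ) (hk : 2 ≤ k) (ht : 3 ≤ t) :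
    (Matrix.of fun u v => ((windmill k t).dist u v : ℝ)).charpoly =
      (X + C 1) ^ (k * (t - 2)) * ((X + C (t : ℝ)) ^ (k - 1) *
        (X ^ 2 - C (2 * (k * (t - 1)) - t : ℝ) * X - C (k * (t - 1) : ℝ))) := by
  have hD : (Matrix.of fun u v => ((windmill k t).dist u v : ℝ)) =
      (blockMatrix k).submatrix (Option.map Prod.fst) (Option.map Prod.fst) -
        Matrix.scalar _ 1 := by
    ext u v
    simp [windmill_dist, Matrix.one_apply]
  have hB : (Matrix.of fun p q => blockMatrix k p q *
      (Fintype.card {u : Option (Fin k × Fin (t - 1)) // u.map Prod.fst = q} : ℝ)) =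
      (lumpedMatrix t).submatrix Option.isSome Option.isSome
        - Matrix.scalar _ ((t : ℝ) - 1) := by
    have c0 : Fintype.card
        {u : Option (Fin k × Fin (t - 1)) // u.map Prod.fst = none} = 1 := by
      simp
    have c1 : ∀ b, (Fintype.card
        {u : Option (Fin k × Fin (t - 1)) // u.map Prod.fst = some b} : ℝ) = t - 1 := by
      intro b
      have e : Fin (t - 1) ≃ {u : Option (Fin k × Fin (t - 1)) // u.map Prod.fst = some b} :=
        { toFun := fun j => ⟨some (b, j), rfl⟩
          invFun := fun u => match u with
            | ⟨some p, _⟩ => p.2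
          left_inv := fun j => rfl
          right_inv := by rintro ⟨_ | ⟨a, j⟩, h⟩ <;> simp at h ⊢; exact h.symm }
      rw [← Fintype.card_congr e, Fintype.card_fin, Nat.cast_pred (by omega)]
    ext p q
    rcases p with _ | a <;> rcases q with _ | b <;>
      simp only [Matrix.of_apply, c0, c1] <;>
      simp [blockMatrix, lumpedMatrix, Matrix.diagonal_apply]
    split_ifs <;> ring
  have hT : (Matrix.of fun p q : Bool => lumpedMatrix t p q *
      (Fintype.card {u : Option (Fin k) // u.isSome = q} : ℝ)).charpoly =
      X ^ 2 - C (t + 2 * (t - 1) * k : ℝ) * X + C ((t - 1) * k * (2 * t - 1) : ℝ) := by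
    have c0 : Fintype.card {u : Option (Fin k) // u.isSome = false} = 1 := by
      simp
    have c1 : Fintype.card {u : Option (Fin k) // u.isSome = true} = k := by
      have h := Fintype.card_subtype_compl (fun u : Option (Fin k) => u.isSome = false)
      simp only [Bool.not_eq_false, c0] at h
      simpa using h
    rw [← Matrix.charpoly_reindex finTwoEquiv.symm, Matrix.charpoly_fin_two]
    simp [Matrix.trace, Matrix.det_fin_two, finTwoEquiv, c1, lumpedMatrix]
    ring
  rw [hD, Matrix.charpoly_sub_scalar, charpoly_submatrix_fibers, hB, Matrix.charpoly_sub_scalar,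
    charpoly_submatrix_fibers, hT]
  · have e1 : k * (t - 1) + 1 - (k + 1) = k * (t - 2) := by
      obtain ⟨s, rfl⟩ : ∃ s, t = s + 2 := ⟨t - 2, by omega⟩
      have : s + 2 - 1 = s + 1 := rfl
      simp [this, mul_add]
    have e2 : k + 1 - 2 = k - 1 := by omega
    simp [e1, e2, -mul_eq_mul_left_iff]
    ring
  · simp; omega
  · have : 1 ≤ t - 1 := by omega
    simp; nlinarith

/-! ### Sign patterns of coefficients, and the factor with negative roots -/

/-- The coefficients of `P` are `≥ 0` before `u`, `≤ 0` on `[u, v)` and `≥ 0` from `v` on, for some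
`u ≤ v` with `V ≤ v`. A large `V` excludes the second sign change from the range of interest. -/
def SignPattern (V : ℕ) (P : ℝ[X]) : Prop :=
  ∃ u v : ℕ, V ≤ v ∧ u ≤ v ∧ (∀ i < u, 0 ≤ P.coeff i) ∧
    (∀ i, u ≤ i → i < v → P.coeff i ≤ 0) ∧ (∀ i, v ≤ i → 0 ≤ P.coeff i)

theorem coeff_X_add_C_mul_zero (c : ℝ) (P : ℝ[X]) :
    ((X + C c) * P).coeff 0 = c * P.coeff 0 := by
  simp

theorem coeff_X_add_C_mul_succ (c : ℝ) (P : ℝ[X]) (i : ℕ) :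
    ((X + C c) * P).coeff (i + 1) = P.coeff i + c * P.coeff (i + 1) := by
  simp [add_mul]

/-- Multiplying by `X + c` with `c ≥ 0` cannot create sign changes. -/
theorem SignPattern.mul {V : ℕ} {P : ℝ[X]} (h : SignPattern V P) {c : ℝ} (hc : 0 ≤ c) :
    SignPattern V ((X + C c) * P) := by
  obtain ⟨u, v, hV, huv, h1, h2, h3⟩ := h
  have hnn : ∀ i, (∀ j, j ≤ i → i ≤ j + 1 → 0 ≤ P.coeff j) → 0 ≤ ((X + C c) * P).coeff i := by
    intro i hi
    rcases i with _ | i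
    · rw [coeff_X_add_C_mul_zero]
      exact mul_nonneg hc (hi 0 le_rfl (by omega))
    · rw [coeff_X_add_C_mul_succ]
      exact add_nonneg (hi i (by omega) le_rfl) (mul_nonneg hc (hi _ le_rfl (by omega)))
  have hnp : ∀ i, (∀ j, j ≤ i → i ≤ j + 1 → P.coeff j ≤ 0) → ((X + C c) * P).coeff i ≤ 0 := by
    intro i hi
    rcases i with _ | i
    · rw [coeff_X_add_C_mul_zero]
      exact mul_nonpos_of_nonneg_of_nonpos hc (hi 0 le_rfl (by omega))
    · rw [coeff_X_add_C_mul_succ]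
      exact add_nonpos (hi i (by omega) le_rfl)
        (mul_nonpos_of_nonneg_of_nonpos hc (hi _ le_rfl (by omega)))
  rcases huv.eq_or_lt with rfl | huv
  · have hall : ∀ i, 0 ≤ P.coeff i := fun i => (lt_or_ge i u).elim (h1 i) (h3 i)
    exact ⟨u, u, hV, le_rfl, fun i _ => hnn i fun j _ _ => hall j, fun i _ _ => by omega,
      fun i _ => hnn i fun j _ _ => hall j⟩
  -- Only the coefficients at `u` and `v` mix signs; their signs decide whether the two
  -- sign changes stay or move one step to the right.
  obtain ⟨u', hu1, hu2, hu3⟩ : ∃ u', (u' = u ∨ u' = u + 1) ∧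
      (u' = u → ((X + C c) * P).coeff u ≤ 0) ∧ (u' = u + 1 → 0 ≤ ((X + C c) * P).coeff u) := by
    rcases le_total (((X + C c) * P).coeff u) 0 with h | h
    · exact ⟨u, by simp, fun _ => h, by simp⟩
    · exact ⟨u + 1, by simp, by simp, fun _ => h⟩
  obtain ⟨v', hv1, hv2, hv3⟩ : ∃ v', (v' = v ∨ v' = v + 1) ∧
      (v' = v → 0 ≤ ((X + C c) * P).coeff v) ∧ (v' = v + 1 → ((X + C c) * P).coeff v ≤ 0) := by
    rcases le_total (((X + C c) * P).coeff v) 0 with h | h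
    · exact ⟨v + 1, by simp, by simp, fun _ => h⟩
    · exact ⟨v, by simp, fun _ => h, by simp⟩
  refine ⟨u', v', by omega, by omega, fun i hi => ?_, fun i hi hi' => ?_, fun i hi => ?_⟩
  · rcases lt_or_ge i u with h | h
    · exact hnn i fun j _ _ => h1 j (by omega)
    · obtain rfl : i = u := by omega
      exact hu3 (by omega)
  · rcases eq_or_ne i u with rfl | h
    · exact hu2 (by omega)
    rcases eq_or_ne i v with rfl | h'
    · exact hv3 (by omega)
    exact hnp i fun j _ _ => h2 j (by omega) (by omega)
  · rcases eq_or_ne i v with rfl | h'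
    · exact hv2 (by omega)
    exact hnn i fun j _ _ => h3 j (by omega)

theorem SignPattern.pow_mul {V : ℕ} {P : ℝ[X]} (h : SignPattern V P) {c : ℝ} (hc : 0 ≤ c)
    (a : ℕ) : SignPattern V ((X + C c) ^ a * P) := by
  induction a with
  | zero => simpa
  | succ a ih => rw [pow_succ', mul_assoc]; exact ih.mul hc

theorem coeff_pos_pow_mul {c : ℝ} (hc : 0 < c) (a d : ℕ) (P : ℝ[X])
    (h0 : ∀ i, 0 ≤ P.coeff i) (h1 : ∀ i ≤ d, 0 < P.coeff i) :
    (∀ i, 0 ≤ ((X + C c) ^ a * P).coeff i) ∧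
      ∀ i ≤ a + d, 0 < ((X + C c) ^ a * P).coeff i := by
  induction a with
  | zero => simpa using ⟨h0, h1⟩
  | succ a ih =>
    obtain ⟨ih0, ih1⟩ := ih
    rw [pow_succ', mul_assoc]
    refine ⟨fun i => ?_, fun i hi => ?_⟩
    · rcases i with _ | i
      · rw [coeff_X_add_C_mul_zero]; exact mul_nonneg hc.le (ih0 _)
      · rw [coeff_X_add_C_mul_succ]; exact add_nonneg (ih0 _) (mul_nonneg hc.le (ih0 _))
    · rcases i with _ | i
      · rw [coeff_X_add_C_mul_zero]; exact mul_pos hc (ih1 _ (by omega))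
      · rw [coeff_X_add_C_mul_succ]
        exact add_pos_of_pos_of_nonneg (ih1 _ (by omega)) (mul_nonneg hc.le (ih0 _))

/-- The part of the (negated) characteristic polynomial with roots `-1` and `-t`. The trailing factor
`1` lets results about `(X + C c) ^ m * P` apply directly. -/
noncomputable def baseG (a b : ℕ) (t : ℝ) : ℝ[X] := (X + C 1) ^ a * ((X + C t) ^ b * 1)

theorem baseG_coeff_pos (a b : ℕ) {t : ℝ} (ht : 0 < t) :
    (∀ i, 0 ≤ (baseG a b t).coeff i) ∧ ∀ i ≤ a + b, 0 < (baseG a b t).coeff i := by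
  have h := coeff_pos_pow_mul ht b 0 1 (fun i => by rw [coeff_one]; split_ifs <;> simp)
    (fun i hi => by simp [Nat.le_zero.1 hi])
  exact coeff_pos_pow_mul one_pos a b _ h.1 (by simpa using h.2)

theorem coeff_one_sub_X_mul_succ (P : ℝ[X]) (i : ℕ) :
    ((1 - X) * P).coeff (i + 1) = P.coeff (i + 1) - P.coeff i := by
  simp [sub_mul]

/-- The coefficients of `baseG` are unimodal on every initial range; the bound `B` only limits the
range of the claim. -/
theorem baseG_unimodal (a b : ℕ) {t : ℝ} (ht : 0 < t) (B : ℕ) :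
    ∃ u, (∀ i < u, (baseG a b t).coeff i ≤ (baseG a b t).coeff (i + 1)) ∧
      ∀ i, u ≤ i → i < B → (baseG a b t).coeff (i + 1) ≤ (baseG a b t).coeff i := by
  have h0 : SignPattern (B + 2) (1 - X) := by
    refine ⟨1, B + 2, le_rfl, by omega, fun i hi => ?_, fun i hi _ => ?_, fun i hi => ?_⟩
    · obtain rfl : i = 0 := by omega
      simp
    · obtain ⟨j, rfl⟩ : ∃ j, i = j + 1 := ⟨i - 1, by omega⟩
      rw [coeff_sub, coeff_one, coeff_X, if_neg (by omega)]; split_ifs <;> norm_num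
    · rw [coeff_sub, coeff_one, coeff_X]; rw [if_neg (by omega), if_neg (by omega)]; simp
  obtain ⟨u, v, hv, huv, h1, h2, -⟩ := (h0.pow_mul ht.le b).pow_mul zero_le_one a
  have he : (X + C 1) ^ a * ((X + C t) ^ b * (1 - X)) = (1 - X) * baseG a b t := by
    rw [baseG]; ring
  rw [he] at h1 h2
  refine ⟨u - 1, fun i hi => ?_, fun i hi hi' => ?_⟩
  · have := h1 (i + 1) (by omega)
    rw [coeff_one_sub_X_mul_succ] at this; linarith
  · have := h2 (i + 1) (by omega) (by omega)
    rw [coeff_one_sub_X_mul_succ] at this; linarith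

/-- Three-term recurrence, stated at index `i = j + 2`, for consecutive differences of the
coefficients, read off from `(X + 1) (X + t) G' = (a (X + t) + b (X + 1)) G`. The factor on the right
vanishes, for `t > 0`, within `1` of the mean `a / 2 + b / (t + 1)`. -/
theorem baseG_recurrence (a b : ℕ) (t : ℝ) (j : ℕ) :
    t * (j + 3) * ((baseG a b t).coeff (j + 3) - (baseG a b t).coeff (j + 2)) +
      (a + b - 1 - j) * ((baseG a b t).coeff (j + 2) - (baseG a b t).coeff (j + 1)) =
      (a * (t + 1) + 2 * b + 1 - t - 2 * (t + 1) * (j + 2)) * (baseG a b t).coeff (j + 2) := by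
  have hp : ∀ (c : ℝ) (m : ℕ), (X + C c) * derivative ((X + C c) ^ m) =
      C (m : ℝ) * (X + C c) ^ m := by
    intro c m
    rcases m with _ | m
    · simp
    · rw [derivative_X_add_C_pow]; simp; ring
  have h : (X ^ 2 + C (t + 1) * X + C t) * derivative (baseG a b t) =
      (C (a + b : ℝ) * X + C (a * t + b : ℝ)) * baseG a b t := by
    have e1 : (X ^ 2 + C (t + 1) * X + C t : ℝ[X]) = (X + C 1) * (X + C t) := by
      simp; ring
    have e2 : (C (a + b : ℝ) * X + C (a * t + b : ℝ) : ℝ[X]) =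
        C (a : ℝ) * (X + C t) + C (b : ℝ) * (X + C 1) := by
      simp; ring
    rw [e1, e2, baseG, mul_one, derivative_mul]
    linear_combination (X + C t) ^ (b + 1) * hp 1 a + (X + C 1) ^ (a + 1) * hp t b
  have hc := congrArg (fun P => P.coeff (j + 2)) h
  have e3 : ∀ P : ℝ[X], ((X ^ 2 + C (t + 1) * X + C t) * P).coeff (j + 2) =
      P.coeff j + (t + 1) * P.coeff (j + 1) + t * P.coeff (j + 2) := by
    intro P
    rw [add_mul, add_mul, mul_assoc, coeff_add, coeff_add, coeff_X_pow_mul, coeff_C_mul,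
      coeff_C_mul, coeff_X_mul]
  have e4 : ∀ P : ℝ[X], ((C (a + b : ℝ) * X + C (a * t + b : ℝ)) * P).coeff (j + 2) =
      (a + b) * P.coeff (j + 1) + (a * t + b) * P.coeff (j + 2) := by
    intro P
    rw [add_mul, mul_assoc, coeff_add, coeff_C_mul, coeff_C_mul, coeff_X_mul]
  simp only [e3, e4, coeff_derivative] at hc
  push_cast at hc
  linear_combination hc

/-! ### Unimodality and location of the peak -/

/-- The negated quadratic factor of the characteristic polynomial; it has one negative root and one
positive root. -/
noncomputable def quadQ (k t : ℕ) : ℝ[X] :=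
  C (k * (t - 1) : ℝ) + C (2 * (k * (t - 1)) - t : ℝ) * X - X ^ 2

theorem windmillNormCoeff_eq_neg (k t i : ℕ) : windmillNormCoeff k t i =
    -(Matrix.of fun u v => ((windmill k t).dist u v : ℝ)).charpoly.coeff i := by
  have hc : Fintype.card (Option (Fin k × Fin (t - 1))) = k * (t - 1) + 1 := by simp
  rw [windmillNormCoeff, distCoeff, hc, Nat.add_sub_cancel, ← mul_assoc, ← pow_add,
    ← add_assoc, pow_succ, ← two_mul, pow_mul]
  simp

theorem windmillNormCoeff_eq (k t i : ℕ) (hk : 2 ≤ k) (ht : 3 ≤ t) : windmillNormCoeff k t i =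
    (baseG (k * (t - 2)) (k - 1) t * quadQ k t).coeff i := by
  rw [windmillNormCoeff_eq_neg, windmill_charpoly k t hk ht, ← coeff_neg]
  congr 1
  rw [baseG, quadQ]
  ring

theorem windmillNormCoeff_top (k t : ℕ) : windmillNormCoeff k t (k * (t - 1) + 1) = -1 := by
  rw [windmillNormCoeff_eq_neg]
  have h := (Matrix.charpoly_monic (Matrix.of fun u v => ((windmill k t).dist u v : ℝ)))
  have hd := Matrix.charpoly_natDegree_eq_dim
    (Matrix.of fun u v => ((windmill k t).dist u v : ℝ))
  have hc : Fintype.card (Option (Fin k × Fin (t - 1))) = k * (t - 1) + 1 := by simp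
  rw [Monic, leadingCoeff, hd, hc] at h
  rw [h]

/-- The trace of the distance matrix is zero. -/
theorem windmillNormCoeff_pred (k t : ℕ) : windmillNormCoeff k t (k * (t - 1)) = 0 := by
  rw [windmillNormCoeff_eq_neg]
  have h := Matrix.trace_eq_neg_charpoly_coeff
    (Matrix.of fun u v => ((windmill k t).dist u v : ℝ))
  have hc : Fintype.card (Option (Fin k × Fin (t - 1))) = k * (t - 1) + 1 := by simp
  rw [hc, Nat.add_sub_cancel] at h
  rw [← h]
  simp [Matrix.trace]

theorem signPattern_cubic {p q r : ℝ} (hp : 0 ≤ p) (hq : 0 ≤ q) (hr : 0 ≤ r) :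
    SignPattern 3 (C p + C q * X - C r * X ^ 2 + X ^ 3) := by
  have hc : ∀ i, (C p + C q * X - C r * X ^ 2 + X ^ 3).coeff i =
      (if i = 0 then p else 0) + q * (if 1 = i then 1 else 0) - r * (if i = 2 then 1 else 0) +
        (if i = 3 then 1 else 0) := by
    intro i
    simp only [coeff_add, coeff_sub, coeff_C_mul, coeff_X_pow, coeff_X, coeff_C]
  refine ⟨2, 3, le_rfl, by omega, fun i hi => ?_, fun i hi hi' => ?_, fun i hi => ?_⟩
  · obtain rfl | rfl : i = 0 ∨ i = 1 := by omega
    · simpa [hc] using hp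
    · simpa [hc] using hq
  · obtain rfl : i = 2 := by omega
    simpa [hc] using hr
  · rw [hc, if_neg (by omega), if_neg (by omega), if_neg (by omega)]
    split_ifs <;> simp

/-- The differences of the sequence are the coefficients of `(1 - X) * baseG * quadQ`, which change
sign at most twice; the coefficient at `n` is `-1`, so the second change lies beyond the range. -/
theorem windmill_unimodal (k t : ℕ) (hk : 2 ≤ k) (ht : 3 ≤ t) :
    ∃ m : ℕ, m ≤ k * (t - 1) + 1 - 2 ∧
      (∀ i : ℕ, i < m → windmillNormCoeff k t i ≤ windmillNormCoeff k t (i + 1)) ∧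
      (∀ i : ℕ, m ≤ i → i < k * (t - 1) + 1 - 2 →
        windmillNormCoeff k t (i + 1) ≤ windmillNormCoeff k t i) := by
  have hk' : (2 : ℝ) ≤ k := by exact_mod_cast hk
  have ht' : (3 : ℝ) ≤ t := by exact_mod_cast ht
  have h0 : SignPattern 3 ((1 - X) * quadQ k t) := by
    have e : (1 - X) * quadQ k t = C (k * (t - 1) : ℝ) + C (k * (t - 1) - t : ℝ) * X
        - C (2 * (k * (t - 1)) - t + 1 : ℝ) * X ^ 2 + X ^ 3 := by
      rw [quadQ]; simp only [map_sub, map_add, map_mul, map_one, map_ofNat]; ring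
    rw [e]
    exact signPattern_cubic (by nlinarith) (by nlinarith) (by nlinarith)
  obtain ⟨u, v, -, huv, h1, h2, h3⟩ :=
    (h0.pow_mul (by linarith : (0 : ℝ) ≤ t) (k - 1)).pow_mul zero_le_one (k * (t - 2))
  have hd : ∀ i, ((X + C 1) ^ (k * (t - 2)) * ((X + C (t : ℝ)) ^ (k - 1) *
      ((1 - X) * quadQ k t))).coeff (i + 1) =
      windmillNormCoeff k t (i + 1) - windmillNormCoeff k t i := by
    intro i
    rw [windmillNormCoeff_eq _ _ _ hk ht, windmillNormCoeff_eq _ _ _ hk ht,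
      ← coeff_one_sub_X_mul_succ, baseG]
    congr 1
    ring
  have hn := hd (k * (t - 1))
  rw [windmillNormCoeff_top, windmillNormCoeff_pred] at hn
  have hv : k * (t - 1) + 1 < v := by
    by_contra hcon
    have := h3 (k * (t - 1) + 1) (by omega)
    linarith
  refine ⟨min (u - 1) (k * (t - 1) + 1 - 2), min_le_right _ _, fun i hi => ?_,
    fun i hi hi' => ?_⟩
  · have := h1 (i + 1) (by omega)
    rw [hd] at this; linarith
  · have := h2 (i + 1) (by omega) (by omega)
    rw [hd] at this; linarith

theorem windmillNormCoeff_step (k t j : ℕ) (hk : 2 ≤ k) (ht : 3 ≤ t) {g : ℕ → ℝ}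
    (hg : ∀ i, g i = (baseG (k * (t - 2)) (k - 1) t).coeff i) :
    windmillNormCoeff k t (j + 3) - windmillNormCoeff k t (j + 2) =
      k * (t - 1) * (g (j + 3) - g (j + 2)) +
      (2 * (k * (t - 1)) - t) * (g (j + 2) - g (j + 1)) - (g (j + 1) - g j) := by
  have e : ∀ i, windmillNormCoeff k t (i + 2) = k * (t - 1) * g (i + 2) +
      (2 * (k * (t - 1)) - t) * g (i + 1) - g i := by
    intro i
    rw [windmillNormCoeff_eq _ _ _ hk ht, hg, hg, hg, mul_comm, quadQ, sub_mul, add_mul, mul_assoc,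
      coeff_sub, coeff_add, coeff_X_pow_mul, coeff_C_mul, coeff_C_mul, coeff_X_mul]
  rw [e (j + 1), e j]
  ring

theorem base_recurrence_windmill (k t j : ℕ) (hk : 2 ≤ k) (ht : 3 ≤ t) {g : ℕ → ℝ}
    (hg : ∀ i, g i = (baseG (k * (t - 2)) (k - 1) t).coeff i) :
    t * (j + 3) * (g (j + 3) - g (j + 2)) +
      (k * (t - 1) - 2 - j) * (g (j + 2) - g (j + 1)) =
      (k * t * (t - 1) - (t + 1) * (2 * j + 5)) * g (j + 2) := by
  have h := baseG_recurrence (k * (t - 2)) (k - 1) t j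
  simp only [← hg] at h
  push_cast [Nat.cast_sub (by omega : 2 ≤ t), Nat.cast_sub (by omega : 1 ≤ k)] at h
  linear_combination h

/-- Strict ascent from index `i = j + 2`. The hypotheses `hR`, `hR'` bound the factor of the recurrence
at `i` and `i + 1`, and put `i` at least a constant below `k t (t-1) / (2 (t+1))`. -/
theorem windmill_step_up (k t j : ℕ) (hk : 2 ≤ k) (ht : 3 ≤ t)
    (hj : (j : ℝ) + 4 ≤ k * (t - 1)) (hN : (t : ℝ) ≤ k * (t - 1))
    (hR : (t : ℝ) < k * t * (t - 1) - (t + 1) * (2 * j + 5))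
    (hR' : (0 : ℝ) < k * t * (t - 1) - (t + 1) * (2 * j + 7)) :
    windmillNormCoeff k t (j + 2) < windmillNormCoeff k t (j + 3) := by
  have ht' : (3 : ℝ) ≤ t := by exact_mod_cast ht
  have hj0 : (0 : ℝ) ≤ j := Nat.cast_nonneg j
  obtain ⟨g, hg⟩ : ∃ g : ℕ → ℝ, ∀ i, g i = (baseG (k * (t - 2)) (k - 1) t).coeff i :=
    ⟨_, fun _ => rfl⟩
  obtain ⟨hnn, hpos⟩ := baseG_coeff_pos (k * (t - 2)) (k - 1) (t := (t : ℝ)) (by linarith)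
  obtain ⟨u, hu1, hu2⟩ :=
    baseG_unimodal (k * (t - 2)) (k - 1) (t := (t : ℝ)) (by linarith) (j + 10)
  simp only [← hg] at hnn hpos hu1 hu2
  have hab : j + 3 ≤ k * (t - 2) + (k - 1) := by
    have h : ((j + 3 : ℕ) : ℝ) ≤ ((k * (t - 2) + (k - 1) : ℕ) : ℝ) := by
      push_cast [Nat.cast_sub (by omega : 2 ≤ t), Nat.cast_sub (by omega : 1 ≤ k)]
      linarith
    exact_mod_cast h
  have r0 := base_recurrence_windmill k t j hk ht hg
  have r1 := base_recurrence_windmill k t (j + 1) hk ht hg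
  have hw := windmillNormCoeff_step k t j hk ht hg
  push_cast at r1
  have p2 := hpos (j + 2) (by omega)
  have p3 := hpos (j + 3) hab
  -- Otherwise both differences in the recurrence at `j + 3` are `≤ 0`, against `hR'`.
  have hju : j + 2 < u := by
    by_contra hcon
    have h1 := hu2 (j + 2) (by omega) (by omega)
    have h2 := hu2 (j + 3) (by omega) (by omega)
    have q1 : (t : ℝ) * (j + 1 + 3) * (g (j + 1 + 3) - g (j + 1 + 2)) ≤ 0 :=
      mul_nonpos_of_nonneg_of_nonpos (by positivity) (by linarith)
    have q2 : ((k : ℝ) * (t - 1) - 2 - (j + 1)) * (g (j + 1 + 2) - g (j + 1 + 1)) ≤ 0 :=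
      mul_nonpos_of_nonneg_of_nonpos (by linarith) (by linarith)
    have q3 : 0 < ((k : ℝ) * t * (t - 1) - (t + 1) * (2 * (j + 1) + 5)) * g (j + 1 + 2) :=
      mul_pos (by linarith) p3
    linarith
  have e2 := hu1 (j + 2) hju
  have e1 := hu1 (j + 1) (by omega)
  have n0 := hnn j
  have q1 : 0 ≤ (k * (t - 1) - (j + 3) : ℝ) * (t * (g (j + 3) - g (j + 2))) :=
    mul_nonneg (by linarith) (mul_nonneg (by linarith) (by linarith))
  have q2 : 0 ≤ (t * (2 * (k * (t - 1)) - t) - (k * (t - 1) - 2 - j) : ℝ) *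
      (g (j + 2) - g (j + 1)) := by
    refine mul_nonneg ?_ (by linarith)
    nlinarith
  have q3 : 0 < ((k : ℝ) * t * (t - 1) - (t + 1) * (2 * j + 5) - t) * g (j + 2) :=
    mul_pos (by linarith) p2
  have q4 : (t : ℝ) * (g (j + 1) - g j) ≤ t * g (j + 2) :=
    mul_le_mul_of_nonneg_left (by linarith) (by linarith)
  have hfin : 0 < (t : ℝ) * (windmillNormCoeff k t (j + 3) - windmillNormCoeff k t (j + 2)) := by
    rw [hw]
    linarith
  have := (mul_pos_iff_of_pos_left (by linarith : (0 : ℝ) < t)).1 hfin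
  linarith

/-- Strict descent from index `i = j + 3`. The hypotheses say that `i` lies above
`k t (t-1) / (2 (t+1))` by an amount that is at least a constant, and small compared with `k`. -/
theorem windmill_step_down (k t j : ℕ) (hk : 2 ≤ k) (ht : 3 ≤ t)
    (hj : (j : ℝ) + 5 ≤ k * (t - 1)) (hN : (t : ℝ) ≤ k * (t - 1))
    (hR : k * t * (t - 1) - (t + 1) * (2 * j + 7) < (-t : ℝ))
    (hR' : k * t * (t - 1) - (t + 1) * (2 * j + 5) < (0 : ℝ))
    (hR'' : -(k * t * (t - 1) - (t + 1) * (2 * j + 5)) ≤ (k * (t - 1) - 2 - j : ℝ)) :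
    windmillNormCoeff k t (j + 4) < windmillNormCoeff k t (j + 3) := by
  have ht' : (3 : ℝ) ≤ t := by exact_mod_cast ht
  have hj0 : (0 : ℝ) ≤ j := Nat.cast_nonneg j
  obtain ⟨g, hg⟩ : ∃ g : ℕ → ℝ, ∀ i, g i = (baseG (k * (t - 2)) (k - 1) t).coeff i :=
    ⟨_, fun _ => rfl⟩
  obtain ⟨hnn, hpos⟩ := baseG_coeff_pos (k * (t - 2)) (k - 1) (t := (t : ℝ)) (by linarith)
  obtain ⟨u, hu1, hu2⟩ :=
    baseG_unimodal (k * (t - 2)) (k - 1) (t := (t : ℝ)) (by linarith) (j + 10)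
  simp only [← hg] at hnn hpos hu1 hu2
  have hab : j + 3 ≤ k * (t - 2) + (k - 1) := by
    have h : ((j + 3 : ℕ) : ℝ) ≤ ((k * (t - 2) + (k - 1) : ℕ) : ℝ) := by
      push_cast [Nat.cast_sub (by omega : 2 ≤ t), Nat.cast_sub (by omega : 1 ≤ k)]
      linarith
    exact_mod_cast h
  have r0 := base_recurrence_windmill k t j hk ht hg
  have r1 := base_recurrence_windmill k t (j + 1) hk ht hg
  have hw := windmillNormCoeff_step k t (j + 1) hk ht hg
  simp only [add_assoc, Nat.reduceAdd] at r1 hw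
  push_cast at r1
  have p2 := hpos (j + 2) (by omega)
  have p3 := hpos (j + 3) hab
  -- Otherwise both differences in the recurrence at `j + 2` are `≥ 0`, against `hR'`.
  have hju : u ≤ j + 2 := by
    by_contra hcon
    have h1 := hu1 (j + 2) (by omega)
    have h2 := hu1 (j + 1) (by omega)
    have q1 : 0 ≤ (t : ℝ) * (j + 3) * (g (j + 3) - g (j + 2)) :=
      mul_nonneg (by positivity) (by linarith)
    have q2 : 0 ≤ ((k : ℝ) * (t - 1) - 2 - j) * (g (j + 2) - g (j + 1)) :=
      mul_nonneg (by linarith) (by linarith)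
    have q3 : ((k : ℝ) * t * (t - 1) - (t + 1) * (2 * j + 5)) * g (j + 2) < 0 :=
      mul_neg_of_neg_of_pos (by linarith) p2
    linarith
  have e3 := hu2 (j + 3) (by omega) (by omega)
  have e2 := hu2 (j + 2) (by omega) (by omega)
  -- The previous difference `g (j+1) - g (j+2)` is at most `g (j+2)`, by the recurrence at `j+2`.
  have q0 : g (j + 1) - g (j + 2) ≤ g (j + 2) := by
    have c : (0 : ℝ) < k * (t - 1) - 2 - j := by linarith
    have d1 : (t : ℝ) * (j + 3) * (g (j + 3) - g (j + 2)) ≤ 0 :=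
      mul_nonpos_of_nonneg_of_nonpos (by positivity) (by linarith)
    have d2 := mul_le_mul_of_nonneg_right hR'' p2.le
    refine le_of_mul_le_mul_left ?_ c
    linarith
  have q1 : 0 ≤ (k * (t - 1) - (j + 4) : ℝ) * (t * (g (j + 3) - g (j + 4))) :=
    mul_nonneg (by linarith) (mul_nonneg (by linarith) (by linarith))
  have q2 : 0 ≤ (t * (2 * (k * (t - 1)) - t) - t - (k * (t - 1) - 3 - j) : ℝ) *
      (g (j + 2) - g (j + 3)) := by
    refine mul_nonneg ?_ (by linarith)
    nlinarith
  have q3 : ((k : ℝ) * t * (t - 1) - (t + 1) * (2 * j + 7) + t) * g (j + 3) < 0 :=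
    mul_neg_of_neg_of_pos (by linarith) p3
  have q4 : (t : ℝ) * (g (j + 1) - g (j + 2)) ≤ t * g (j + 2) :=
    mul_le_mul_of_nonneg_left q0 (by linarith)
  have hfin : 0 < (t : ℝ) * -(windmillNormCoeff k t (j + 4) - windmillNormCoeff k t (j + 3)) := by
    rw [hw]
    linarith
  have := (mul_pos_iff_of_pos_left (by linarith : (0 : ℝ) < t)).1 hfin
  linarith

/-- In a unimodal sequence a strict ascent at `x` and a strict descent at `y` confine every
maximiser to `[x + 1, y]`. -/
theorem maximiser_mem_of_unimodal {f : ℕ → ℝ} {p L x y m : ℕ}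
    (hp1 : ∀ i < p, f i ≤ f (i + 1)) (hp2 : ∀ i, p ≤ i → i < L → f (i + 1) ≤ f i)
    (hxL : x < L) (hyL : y < L) (hx : f x < f (x + 1)) (hy : f (y + 1) < f y)
    (hm : m ≤ L) (hmax : ∀ i ≤ L, f i ≤ f m) : x + 1 ≤ m ∧ m ≤ y := by
  have hpl : x + 1 ≤ p := by
    by_contra hcon
    exact absurd (hp2 x (by omega) hxL) (not_le.2 hx)
  have hpu : p ≤ y := by
    by_contra hcon
    exact absurd (hp1 y (by omega)) (not_le.2 hy)
  constructor
  · by_contra hcon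
    have hmono : ∀ n, m ≤ n → n ≤ x → f m ≤ f n := by
      intro n hn
      induction n, hn using Nat.le_induction with
      | base => exact fun _ => le_rfl
      | succ n _ ih => exact fun h => (ih (by omega)).trans (hp1 n (by omega))
    have h1 := hmono x (by omega) le_rfl
    have h2 := hmax (x + 1) hxL
    linarith
  · by_contra hcon
    have hanti : ∀ n, y + 1 ≤ n → n ≤ m → f n ≤ f (y + 1) := by
      intro n hn
      induction n, hn using Nat.le_induction with
      | base => exact fun _ => le_rfl
      | succ n _ ih => exact fun h => (hp2 n (by omega) (by omega)).trans (ih (by omega))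
    have h1 := hanti m (by omega) le_rfl
    have h2 := hmax y hyL.le
    linarith

/-- For fixed `t ≥ 3` and every `k ≥ 2`, the sequence
`(-1)^(n-1) c_0(W(k,t)), …, (-1)^(n-1) c_(n-2)(W(k,t))` (with `n = k(t-1)+1`) is unimodal,
and as `k → ∞` every peak of this sequence occurs at `k t (t-1) / (2(t+1)) + O(log k)`. -/
theorem windmill_distCoeff_unimodal_peak (t : ℕ) (ht : 3 ≤ t) :
    (∀ k : ℕ, 2 ≤ k →
      ∃ m : ℕ, m ≤ k * (t - 1) + 1 - 2 ∧
        (∀ i : ℕ, i < m → windmillNormCoeff k t i ≤ windmillNormCoeff k t (i + 1)) ∧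
        (∀ i : ℕ, m ≤ i → i < k * (t - 1) + 1 - 2 →
          windmillNormCoeff k t (i + 1) ≤ windmillNormCoeff k t i)) ∧
    ∃ C : ℝ, 0 < C ∧ ∃ K : ℕ, 2 ≤ K ∧ ∀ k : ℕ, K ≤ k →
      ∀ m : ℕ, m ≤ k * (t - 1) + 1 - 2 →
        (∀ i : ℕ, i ≤ k * (t - 1) + 1 - 2 →
          windmillNormCoeff k t i ≤ windmillNormCoeff k t m) →
        |(m : ℝ) - (k : ℝ) * (t : ℝ) * ((t : ℝ) - 1) / (2 * ((t : ℝ) + 1))| ≤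
          C * Real.log k := by
  refine ⟨fun k hk => windmill_unimodal k t hk ht, 3, by norm_num, 100, by norm_num,
    fun k hk m hm hmax => ?_⟩
  obtain ⟨p, hp, hp1, hp2⟩ := windmill_unimodal k t (by omega) ht
  have hk' : (100 : ℝ) ≤ k := by exact_mod_cast hk
  have ht' : (3 : ℝ) ≤ t := by exact_mod_cast ht
  obtain ⟨μ, hμ⟩ : ∃ μ : ℝ, μ = (k : ℝ) * t * (t - 1) / (2 * (t + 1)) := ⟨_, rfl⟩
  rw [← hμ]
  have hμ1 : 2 * (t + 1) * μ = k * t * (t - 1) := by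
    rw [hμ]; field_simp
  -- `t / (t + 1) ≥ 3 / 4`, so the mean is between 3/8 and 1/2 of `k (t - 1)`.
  have hμ2 : μ ≤ k * (t - 1) / 2 := by
    have : 0 ≤ (k : ℝ) * (t - 1) := mul_nonneg (by linarith) (by linarith)
    refine le_of_mul_le_mul_left ?_ (by linarith : (0 : ℝ) < 2 * (t + 1))
    linarith
  have hμ3 : 3 / 8 * (k * (t - 1)) ≤ μ := by
    have : 0 ≤ (k : ℝ) * (t - 1) * (t - 3) :=
      mul_nonneg (mul_nonneg (by linarith) (by linarith)) (by linarith)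
    refine le_of_mul_le_mul_left ?_ (by linarith : (0 : ℝ) < 2 * (t + 1))
    linarith
  have hkt : 100 * ((t : ℝ) - 1) ≤ k * (t - 1) :=
    mul_le_mul_of_nonneg_right hk' (by linarith)
  obtain ⟨q, hq⟩ : ∃ q, q = ⌊μ⌋₊ := ⟨_, rfl⟩
  have hq1 : (q : ℝ) ≤ μ := by
    rw [hq]; exact Nat.floor_le (by linarith)
  have hq2 : μ < q + 1 := by
    rw [hq]; exact Nat.lt_floor_add_one μ
  have hq4 : 4 ≤ q := by
    have : (3 : ℝ) < q := by linarith
    exact_mod_cast this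
  obtain ⟨j, rfl⟩ := Nat.exists_eq_add_of_le' hq4
  push_cast at hq1 hq2
  -- With `⌊μ⌋ = j + 4`, the sequence ascends at `j + 2` and descends at `j + 6`.
  have hP1 : ((t : ℝ) + 1) * (j + 4) ≤ (t + 1) * μ :=
    mul_le_mul_of_nonneg_left hq1 (by linarith)
  have hP2 : ((t : ℝ) + 1) * μ < (t + 1) * (j + 4 + 1) :=
    mul_lt_mul_of_pos_left hq2 (by linarith)
  have hup := windmill_step_up k t j (by omega) ht (by linarith) (by linarith)
    (by linarith) (by linarith)
  have hdown := windmill_step_down k t (j + 3) (by omega) ht (by push_cast; linarith)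
    (by linarith) (by push_cast; linarith) (by push_cast; linarith) (by push_cast; linarith)
  have hjn : j + 7 ≤ k * (t - 1) + 1 - 2 := by
    have h : ((j + 8 : ℕ) : ℝ) ≤ ((k * (t - 1) : ℕ) : ℝ) := by
      push_cast [Nat.cast_sub (by omega : 1 ≤ t)]
      linarith
    have h' : j + 8 ≤ k * (t - 1) := by exact_mod_cast h
    omega
  obtain ⟨hml, hmu⟩ := maximiser_mem_of_unimodal hp1 hp2 (x := j + 2) (y := j + 6)
    (by omega) (by omega) hup hdown hm hmax
  have hlog : 1 ≤ Real.log k := by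
    rw [Real.le_log_iff_exp_le (by linarith)]
    linarith [Real.exp_one_lt_d9]
  have hml' : (j : ℝ) + 3 ≤ m := by 
    have : ((j + 2 + 1 : ℕ) : ℝ) ≤ m := Nat.cast_le.2 hml
    push_cast at this; linarith
  have hmu' : (m : ℝ) ≤ j + 6 := by exact_mod_cast hmu
  rw [abs_le]
  constructor <;> linarith
end
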